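/- arXiv:2601.20841 — 2 statements merged into one kernel-verified Lean document; each statement's English description precedes it below -/
import Mathlib

section
/- Let η > 0, U ∈ ℝ, and C_Q ∈ ℝ. Let h(x) = h_k + m·(x − x_k) be affine with slope m ≠ 0 and h(x) > 0 on the interval [x_k, x_{k+1}]. If p : ℝ → ℝ is differentiable on [x_k, x_{k+1}] and satisfies h(x)³·p'(x) = C_Q + 6·η·U·h(x) for all x ∈ [x_k, x_{k+1}], then there exists a constant C_P such that p(x) = −(1/m)·( C_Q/(2·h(x)²) + 6·η·U/h(x) ) + C_P for all x ∈ [x_k, x_{k+1}]. -/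
/-- On a linear height component with nonzero slope, every solution of the first
integral `h³·p' = C_Q + 6·η·U·h` of the Reynolds equation has the closed form
`p = −(1/m)·(C_Q/(2h²) + 6ηU/h) + C_P` for some constant `C_P`. -/
theorem reynolds_pwl_solution_unique
    (η U CQ hk m xk xk1 : ℝ) (hη : 0 < η) (hm : m ≠ 0)
    (h : ℝ → ℝ) (hdef : ∀ x, h x = hk + m * (x - xk))
    (hhpos : ∀ x ∈ Set.Icc xk xk1, 0 < h x)
    (p : ℝ → ℝ)
    (hpd : ∀ x ∈ Set.Icc xk xk1, DifferentiableAt ℝ p x)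
    (hrel : ∀ x ∈ Set.Icc xk xk1,
      (h x) ^ 3 * deriv p x = CQ + 6 * η * U * h x) :
    ∃ CP : ℝ, ∀ x ∈ Set.Icc xk xk1,
      p x = -(1 / m) * (CQ / (2 * (h x) ^ 2) + 6 * η * U / h x) + CP := by
  have key : ∀ x ∈ Set.Icc xk xk1, HasDerivAt
      (fun y => p y - -(1 / m) * (CQ / (2 * (h y) ^ 2) + 6 * η * U / h y)) 0 x := by
    intro x hx
    have hne : h x ≠ 0 := (hhpos x hx).ne'
    have hh : HasDerivAt h m x := by
      have e : h = fun y => hk + m * (y - xk) := funext hdef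
      rw [e]
      simpa using (((hasDerivAt_id x).sub_const xk).const_mul m).const_add hk
    have h1 := (hasDerivAt_const x CQ).fun_div ((hh.fun_pow 2).const_mul 2)
      (by positivity)
    have h2 := (hasDerivAt_const x (6 * η * U)).fun_div hh hne
    have h3 := (hpd x hx).hasDerivAt.fun_sub ((h1.fun_add h2).const_mul (-(1 / m)))
    have hd : deriv p x = (CQ + 6 * η * U * h x) / (h x) ^ 3 := by
      rw [eq_div_iff (pow_ne_zero 3 hne), mul_comm]
      exact hrel x hx
    refine h3.congr_deriv ?_
    rw [hd]
    norm_num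
    field_simp
    ring
  have hc := constant_of_has_deriv_right_zero
    (fun x hx => (key x hx).continuousAt.continuousWithinAt)
    (fun x hx => (key x (Set.Ico_subset_Icc_self hx)).hasDerivWithinAt)
  exact ⟨_, fun x hx => sub_eq_iff_eq_add'.mp (hc x hx)⟩
end

section
/- Let n ≥ 2 and let K be the n × n real symmetric tridiagonal matrix with diagonal entries K_{i,i} = α_i for 0 ≤ i ≤ n−1 and off-diagonal entries K_{i,i+1} = K_{i+1,i} = β_i for 0 ≤ i ≤ n−2, all other entries zero. Define recursively S_{n−2} = −β_{n−2}/α_{n−1} and S_k = −β_k/(α_{k+1} + S_{k+1}·β_{k+1}) for 0 ≤ k ≤ n−3; define G_{0,0} = 1/(α_0 + β_0·S_0), G_{i+1,i+1} = (1 − β_i·G_{i,i}·S_i)/(α_{i+1} + β_{i+1}·S_{i+1}) for 0 ≤ i ≤ n−3, and G_{n−1,n−1} = (1 − β_{n−2}·G_{n−2,n−2}·S_{n−2})/α_{n−1}; and for i < j set G_{i,j} = G_{i,i}·∏_{k=i}^{j−1} S_k, with G_{j,i} = G_{i,j}. Assume every denominator appearing in these recursions is nonzero. Then K is invertible and G =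 K⁻¹, i.e. K·G is the identity matrix. -/
open Matrix Finset

/-- Recursive inversion of a symmetric tridiagonal matrix: with the sequences
`S` and diagonal entries `d` defined by the stated recursions (all denominators
nonzero), the symmetric matrix `G` with `G i j = d (min i j) · ∏ S_k` is the
inverse of the symmetric tridiagonal matrix `K` with diagonal `α` and
off-diagonal `β`. -/
theorem tridiagonal_schur_inverse
    (n : ℕ) (hn : 2 ≤ n) (α β : ℕ → ℝ)
    (K G : Matrix (Fin n) (Fin n) ℝ)
    (hK : ∀ i j : Fin n, K i j =
      if (i : ℕ) = j then α i
      else if (i : ℕ) + 1 = j then β i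
      else if (j : ℕ) + 1 = i then β j
      else 0)
    (S : ℕ → ℝ)
    (hS_base : S (n - 2) = -β (n - 2) / α (n - 1))
    (hS_rec : ∀ k, k + 3 ≤ n →
      S k = -β k / (α (k + 1) + S (k + 1) * β (k + 1)))
    (d : ℕ → ℝ)
    (hd0 : d 0 = 1 / (α 0 + β 0 * S 0))
    (hd_rec : ∀ i, i + 3 ≤ n →
      d (i + 1) = (1 - β i * d i * S i) / (α (i + 1) + β (i + 1) * S (i + 1)))
    (hd_last : d (n - 1) = (1 - β (n - 2) * d (n - 2) * S (n - 2)) / α (n - 1))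
    (hG : ∀ i j : Fin n, G i j =
      if (i : ℕ) = j then d i
      else if (i : ℕ) < j then d i * ∏ k ∈ Finset.Ico (i : ℕ) (j : ℕ), S k
      else d j * ∏ k ∈ Finset.Ico (j : ℕ) (i : ℕ), S k)
    (hden_last : α (n - 1) ≠ 0)
    (hden_rec : ∀ k, k + 3 ≤ n → α (k + 1) + S (k + 1) * β (k + 1) ≠ 0)
    (hden0 : α 0 + β 0 * S 0 ≠ 0) :
    IsUnit K ∧ G = K⁻¹ := by
  obtain ⟨D, hDdef⟩ : ∃ D : ℕ → ℝ, ∀ k, D k = α k + (if k + 1 < n then β k * S k else 0) :=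
    ⟨_, fun _ => rfl⟩
  have hSD : ∀ k, k + 1 < n → S k * D (k + 1) = - β k := by
    intro k hk
    by_cases h : k + 3 ≤ n
    · have h1 := hden_rec k h
      have h2 : D (k + 1) = α (k + 1) + S (k + 1) * β (k + 1) := by
        rw [hDdef, if_pos (by omega)]; ring
      rw [h2, hS_rec k h, div_mul_cancel₀ _ h1]
    · obtain rfl : n = k + 2 := by omega
      have h2 : D (k + 1) = α (k + 1) := by
        rw [hDdef, if_neg (by omega)]; ring
      have e1 : k + 2 - 2 = k := by omega
      have e2 : k + 2 - 1 = k + 1 := by omega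
      rw [e1, e2] at hS_base
      rw [e2] at hden_last
      rw [h2, hS_base, div_mul_cancel₀ _ hden_last]
  have hD0 : d 0 * D 0 = 1 := by
    rw [hDdef, if_pos (by omega), hd0, one_div, inv_mul_cancel₀ hden0]
  have hdD : ∀ k, k + 1 < n → d (k + 1) * D (k + 1) = 1 - β k * d k * S k := by
    intro k hk
    by_cases h : k + 3 ≤ n
    · have h1 := hden_rec k h
      rw [mul_comm (S (k + 1))] at h1
      have h2 : D (k + 1) = α (k + 1) + β (k + 1) * S (k + 1) := by
        rw [hDdef, if_pos (by omega)]
      rw [h2, hd_rec k h, div_mul_cancel₀ _ h1]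
    · obtain rfl : n = k + 2 := by omega
      have h2 : D (k + 1) = α (k + 1) := by
        rw [hDdef, if_neg (by omega)]; ring
      have e1 : k + 2 - 2 = k := by omega
      have e2 : k + 2 - 1 = k + 1 := by omega
      rw [e1, e2] at hd_last
      rw [e2] at hden_last
      rw [h2, hd_last, div_mul_cancel₀ _ hden_last]
  obtain ⟨g, hgdef⟩ : ∃ g : ℕ → ℕ → ℝ, ∀ i j, g i j =
      if i ≤ j then d i * ∏ k ∈ Finset.Ico i j, S k
      else d j * ∏ k ∈ Finset.Ico j i, S k := ⟨_, fun _ _ => rfl⟩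
  have hGg : ∀ i j : Fin n, G i j = g i j := by
    intro i j
    rw [hG, hgdef]
    rcases lt_trichotomy (i : ℕ) j with h | h | h
    · rw [if_neg h.ne, if_pos h, if_pos h.le]
    · simp [h]
    · rw [if_neg h.ne', if_neg h.not_gt, if_neg (by omega)]
  -- recursions for g
  have hdiag : ∀ i, g i i = d i := by intro i; simp [hgdef]
  have hlow : ∀ i j, j ≤ i → g (i + 1) j = g i j * S i := by
    intro i j hij
    have e : g i j = d j * ∏ k ∈ Finset.Ico j i, S k := by
      rw [hgdef]
      split_ifs with h
      · obtain rfl : i = j := by omega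
        rfl
      · rfl
    rw [e, hgdef, if_neg (by omega), Finset.prod_Ico_succ_top hij]; ring
  have hup : ∀ i j, i ≤ j → g i j = d i * ∏ k ∈ Finset.Ico i j, S k := by
    intro i j hij
    rw [hgdef, if_pos hij]
  have hrow : ∀ i j, i < n → j < n →
      (∑ k ∈ Finset.range n, (if i = k then α i else if i + 1 = k then β i
        else if k + 1 = i then β k else 0) * g k j) =
      α i * g i j + (if i + 1 < n then β i * g (i + 1) j else 0)
        + (if 0 < i then β (i - 1) * g (i - 1) j else 0) := by
    intro i j hi hj
    have : ∀ k ∈ Finset.range n, (if i = k then α i else if i + 1 = k then β i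
        else if k + 1 = i then β k else 0) * g k j =
        (if i = k then α i * g i j else 0) + (if i + 1 = k then β i * g (i + 1) j else 0)
        + (if i - 1 = k then (if 0 < i then β (i - 1) * g (i - 1) j else 0) else 0) := by
      intro k _
      rcases Nat.eq_zero_or_pos i with rfl | hp
      · by_cases h1 : 0 = k
        · subst h1; simp
        · by_cases h2 : 0 + 1 = k
          · subst h2; simp
          · simp [h1, h2]
      · obtain ⟨m, rfl⟩ : ∃ m, i = m + 1 := ⟨i - 1, by omega⟩
        by_cases h1 : m + 1 = k
        · subst h1; simp
        · by_cases h2 : m + 1 + 1 = k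
          · subst h2; simp; intro h; omega
          · by_cases h3 : m = k
            · subst h3; simp [h2]
            · have h4 : ¬ (k = m) := fun h => h3 h.symm
              simp [h1, h2, h3, h4]
    rw [Finset.sum_congr rfl this, Finset.sum_add_distrib, Finset.sum_add_distrib,
      Finset.sum_ite_eq, Finset.sum_ite_eq, Finset.sum_ite_eq]
    have : i - 1 < n := by omega
    simp [hi, this]
  have hKG : K * G = 1 := by
    ext i j
    have e : (K * G) i j = ∑ k : Fin n, (fun k : ℕ => (if (i : ℕ) = k then α i else
        if (i : ℕ) + 1 = k then β i
        else if k + 1 = (i : ℕ) then β k else 0) * g k j) k := by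
      rw [Matrix.mul_apply]
      exact Finset.sum_congr rfl fun k _ => by rw [hK, hGg]
    rw [(e.trans (Fin.sum_univ_eq_sum_range (fun k : ℕ => (if (i : ℕ) = k then α i else
        if (i : ℕ) + 1 = k then β i
        else if k + 1 = (i : ℕ) then β k else 0) * g k j) n)).trans (hrow _ _ i.2 j.2), Matrix.one_apply]
    obtain ⟨i, hi⟩ := i
    obtain ⟨j, hj⟩ := j
    simp only [Fin.mk.injEq]
    have hDi := hDdef i
    rcases lt_trichotomy i j with h | h | h
    · rw [if_neg h.ne, if_pos (by omega)]
      rw [if_pos (by omega)] at hDi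
      have a1 := hSD i (by omega)
      have a2 := hdD i (by omega)
      rw [hup i j h.le, hup (i + 1) j h, Finset.prod_eq_prod_Ico_succ_bot h]
      set Q := ∏ k ∈ Finset.Ico (i + 1) j, S k
      rcases Nat.eq_zero_or_pos i with rfl | hp
      · simp only [lt_irrefl, if_false]
        linear_combination (Q * S 0) * hD0 - Q * S 0 * d 0 * hDi - Q * S 0 * a2
          + Q * d (0 + 1) * a1
      · obtain ⟨m, rfl⟩ : ∃ m, i = m + 1 := ⟨i - 1, by omega⟩
        have a3 := hdD m (by omega)
        rw [if_pos hp, Nat.add_sub_cancel, hup m j (by omega),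
          Finset.prod_eq_prod_Ico_succ_bot (by omega), Finset.prod_eq_prod_Ico_succ_bot h]
        linear_combination (Q * S (m + 1)) * a3 - Q * S (m + 1) * d (m + 1) * hDi
          - Q * S (m + 1) * a2 + Q * d (m + 1 + 1) * a1
    · subst h
      rw [if_pos rfl, hlow i i le_rfl, hdiag]
      have e1 : α i * d i + (if i + 1 < n then β i * (d i * S i) else 0) = d i * D i := by
        rw [hDi]; split_ifs <;> ring
      rw [e1]
      rcases Nat.eq_zero_or_pos i with rfl | hp
      · simpa using hD0
      · obtain ⟨m, rfl⟩ : ∃ m, i = m + 1 := ⟨i - 1, by omega⟩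
        have a3 := hdD m (by omega)
        rw [if_pos hp, Nat.add_sub_cancel, hup m (m + 1) (by omega)]
        simp only [Nat.Ico_succ_singleton, Finset.prod_singleton]
        linear_combination a3
    · rw [if_neg h.ne', if_pos (by omega : 0 < i), hlow i j h.le]
      have e1 : α i * g i j + (if i + 1 < n then β i * (g i j * S i) else 0) = g i j * D i := by
        rw [hDi]; split_ifs <;> ring
      rw [e1]
      obtain ⟨m, rfl⟩ : ∃ m, i = m + 1 := ⟨i - 1, by omega⟩
      rw [hlow m j (by omega), Nat.add_sub_cancel]
      linear_combination g m j * hSD m (by omega)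
  exact ⟨IsUnit.of_mul_eq_one _ hKG, (Matrix.inv_eq_right_inv hKG).symm⟩
end
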